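/- Let F : T → T be a polynomial-like branched covering of a simplicial tree with local degree function deg. Then the base v₀ is a critical point: its critical multiplicity satisfies m(v₀) > 0. -/

import Mathlib

open SimpleGraph Function Opposite

/-- A locally finite simplicial tree together with a self-map that is a
branched covering: a simplicial map (edges map onto edges) such that the
induced map on edges adjacent to any vertex is surjective onto the edges
adjacent to the image vertex, and every vertex has finitely many preimages. -/
structure TreeDyn (V : Type) where
  G : SimpleGraph V
  isTree : G.IsTree
  locFin : ∀ v : V, (G.neighborSet v).Finite
  F : V → V
  adjMap : ∀ ⦃v w : V⦄, G.Adj v w → G.Adj (F v) (F w)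
  edgeSurj : ∀ ⦃v w' : V⦄, G.Adj (F v) w' → ∃ w : V, G.Adj v w ∧ F w = w'
  finFibers : ∀ v' : V, {v : V | F v = v'}.Finite

namespace TreeDyn

variable {V : Type}

/-- A local degree function for the branched covering `T.F`: positive on
vertices and edges (edges adjacent to `v` are recorded by their other
endpoint), symmetric on edges, satisfying the Riemann–Hurwitz style
inequality `2 deg(v) - 2 ≥ Σ (deg e - 1)` at each vertex, and the local
equality `deg v = Σ {deg e' : e' adjacent to v, F(e') = F(e)}` for each
edge `e` adjacent to `v`. -/
def IsLocalDeg (T : TreeDyn V) (dV : V → ℕ) (dE : V → V → ℕ) : Prop :=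
  (∀ v w : V, dE v w = dE w v) ∧
  (∀ v : V, 0 < dV v) ∧
  (∀ ⦃v w : V⦄, T.G.Adj v w → 0 < dE v w) ∧
  (∀ v : V, (∑ᶠ w ∈ T.G.neighborSet v, (dE v w - 1)) + 2 ≤ 2 * dV v) ∧
  (∀ ⦃v w : V⦄, T.G.Adj v w →
    dV v = ∑ᶠ w' ∈ {w' : V | T.G.Adj v w' ∧ T.F w' = T.F w}, dE v w')

/-- `x` and `y` are in the same grand orbit if `F^[n] x = F^[m] y` for some `n, m > 0`. -/
def GrandOrbit (T : TreeDyn V) (x y : V) : Prop :=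
  ∃ n m : ℕ, 0 < n ∧ 0 < m ∧ T.F^[n] x = T.F^[m] y

end TreeDyn

/-- The natural topology on the space of ends of a graph: the subspace
topology induced from the product of the (discrete) spaces of components
of complements of finite sets. -/
def endTop {V : Type} (G : SimpleGraph V) : TopologicalSpace G.end :=
  TopologicalSpace.induced Subtype.val
    (⨅ K : (Finset V)ᵒᵖ, TopologicalSpace.induced (fun f => f K) ⊥)

/-- An end is isolated if it is an isolated point of the space of ends. -/
def IsIsolatedEnd {V : Type} (G : SimpleGraph V) (e : G.end) : Prop :=
  @IsOpen G.end (endTop G) {e}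

namespace TreeDyn

variable {V : Type}

/-- `T` is polynomial-like with distinguished end `infty`:
(II) a local degree function exists, (I) `infty` is the unique isolated end,
(III) no vertex has valence one, and (IV) the grand orbit of every vertex
contains a vertex of valence at least three. -/
def IsPolyLike (T : TreeDyn V) (infty : T.G.end) : Prop :=
  (∃ dV dE, T.IsLocalDeg dV dE) ∧
  IsIsolatedEnd T.G infty ∧
  (∀ e : T.G.end, IsIsolatedEnd T.G e → e = infty) ∧
  (∀ v : V, (T.G.neighborSet v).ncard ≠ 1) ∧
  (∀ v : V, ∃ w : V, T.GrandOrbit v w ∧ 3 ≤ (T.G.neighborSet w).ncard)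

/-- The vertex `x` lies below the vertex `v` (the path from `x` to the
end `infty` passes through `v`): either `x = v`, or `x` and `infty`
determine different components of the complement of `{v}`. -/
def Below (T : TreeDyn V) (infty : T.G.end) (v x : V) : Prop :=
  x = v ∨ ∃ h : x ∉ (({v} : Finset V) : Set V),
    T.G.componentComplMk h ≠ infty.val (op ({v} : Finset V))

/-- The end `p` lies below the vertex `v` (the path from `p` to `infty`
passes through `v`). -/
def EndBelow (T : TreeDyn V) (infty : T.G.end) (v : V) (p : T.G.end) : Prop :=
  p.val (op ({v} : Finset V)) ≠ infty.val (op ({v} : Finset V))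

/-- `v₀` is the base of the tree: the vertex of valence ≥ 3 closest to
`infty`, i.e. every vertex of valence ≥ 3 lies below it. -/
def IsBase (T : TreeDyn V) (infty : T.G.end) (v₀ : V) : Prop :=
  3 ≤ (T.G.neighborSet v₀).ncard ∧
  ∀ w : V, 3 ≤ (T.G.neighborSet w).ncard → T.Below infty v₀ w

open Classical in
/-- The combinatorial height relative to the base `v₀`: `|h v|` is the
graph distance to `v₀`, with `h v ≥ 0` exactly when `v` lies on the ray
from `v₀` to `infty` (i.e. `v₀` lies below `v`). -/
noncomputable def height (T : TreeDyn V) (infty : T.G.end) (v₀ : V) (v : V) : ℤ :=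
  if T.Below infty v v₀ then (T.G.dist v₀ v : ℤ) else -(T.G.dist v₀ v : ℤ)

/-- `Dg` is the global degree of `T.F`: for every edge `{v,w}`, the sum of
the degrees of the edges mapping onto it equals `Dg`. -/
def IsGlobalDeg (T : TreeDyn V) (dE : V → V → ℕ) (Dg : ℕ) : Prop :=
  ∀ ⦃v w : V⦄, T.G.Adj v w →
    Dg = ∑ᶠ a ∈ {a : V | T.F a = v}, ∑ᶠ b ∈ {b : V | T.G.Adj a b ∧ T.F b = w}, dE a b

/-- The critical multiplicity of a vertex. -/
noncomputable def multV (T : TreeDyn V) (dV : V → ℕ) (dE : V → V → ℕ) (v : V) : ℕ :=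
  2 * dV v - 2 - ∑ᶠ w ∈ T.G.neighborSet v, (dE v w - 1)

/-- The critical multiplicity of an end `p ≠ infty`: the limiting
(= minimal) value of `dV` along the path from `infty` to `p`, minus one. -/
noncomputable def multEnd (T : TreeDyn V) (infty : T.G.end) (dV : V → ℕ) (p : T.G.end) : ℕ :=
  sInf {d : ℕ | ∃ v : V, T.EndBelow infty v p ∧ dV v = d} - 1

/-- `μ` is the mass function: `μ v = 1` for `h(v) ≥ 0` and
`μ(F v) = (deg F / deg v) · μ v`. -/
def IsMass (T : TreeDyn V) (infty : T.G.end) (v₀ : V) (dV : V → ℕ) (Dg : ℕ)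
    (μ : V → ℚ) : Prop :=
  (∀ v : V, 0 ≤ T.height infty v₀ v → μ v = 1) ∧
  (∀ v : V, μ (T.F v) = ((Dg : ℚ) / (dV v : ℚ)) * μ v)

end TreeDyn

/-!
There is no branching beyond the base `v₀`, so it starts an unbranched ray `v₀, v₁, …` towards `∞`.
Any unbranched ray converges to an isolated end, hence is eventually absorbed in this one. In
particular `F` maps `v₀, v₁, …` to an unbranched ray, and it translates the ray by some `a`. If
`a > 0`, then `F v₀` has valence two while `v₀` has valence at least three, and the Riemann–Hurwitz
count at `v₀` gives `m(v₀) > 0`.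

If `a = 0`, let `flux i` be the total gradient of the distance to `v₀`, summed over the edges above
the edge from `vᵢ` to `vᵢ₊₁`. The Laplacian of the distance at a vertex is at least its valence
minus two, so `flux` is nondecreasing; it is bounded by the number of edges summed over, hence by
the global degree. Far out on the ray no preimage can therefore branch, so a lift of the ray ends up
on the ray itself, where `F` is the identity: the lift never left it. Thus `v₁` is its own only
preimage, and its grand orbit contains no branch point, contradicting (IV).
-/

open Filter

/-! ### Rays in trees -/

section Tree

variable {V : Type*} {G : SimpleGraph V}

theorem eq_of_adj_of_dist_eq_add_one (hG : G.IsTree) {r p q x : V} (hp : G.Adj p x)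
    (hq : G.Adj q x) (hpx : G.dist r x = G.dist r p + 1) (hqx : G.dist r x = G.dist r q + 1) :
    p = q := by
  obtain ⟨P, hP⟩ := hG.connected.exists_walk_length_eq_dist r p
  obtain ⟨Q, hQ⟩ := hG.connected.exists_walk_length_eq_dist r q
  have hP' : (P.concat hp).IsPath := Walk.isPath_of_length_eq_dist _ (by simp [hP, hpx])
  have hQ' : (Q.concat hq).IsPath := Walk.isPath_of_length_eq_dist _ (by simp [hQ, hqx])
  have h : P.concat hp = Q.concat hq := (hG.existsUnique_path r x).unique hP' hQ'
  simpa using congrArg Walk.penultimate h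

theorem degree_sub_two_le_sum_dist_sub (hG : G.IsTree) (r x : V) [Fintype (G.neighborSet x)] :
    (G.degree x : ℤ) - 2 ≤ ∑ u ∈ G.neighborFinset x, ((G.dist r u : ℤ) - G.dist r x) := by
  have hparents : ((G.neighborFinset x).filter fun u => G.dist r x = G.dist r u + 1).card ≤ 1 := by
    refine Finset.card_le_one.2 fun p hp q hq => ?_
    simp only [Finset.mem_filter, mem_neighborFinset] at hp hq
    exact eq_of_adj_of_dist_eq_add_one hG hp.1.symm hq.1.symm hp.2 hq.2
  have hstep : ∀ u ∈ G.neighborFinset x, (G.dist r u : ℤ) - G.dist r x =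
      1 - 2 * if G.dist r x = G.dist r u + 1 then 1 else 0 := fun u hu => by
    have := hG.dist_eq_dist_add_one_of_adj r ((G.mem_neighborFinset x u).1 hu)
    split_ifs <;> omega
  rw [Finset.sum_congr rfl hstep, Finset.sum_sub_distrib, ← Finset.mul_sum, Finset.sum_boole,
    Finset.sum_const, card_neighborFinset_eq_degree, nsmul_one]
  omega

/-- A non-backtracking ray: an infinite walk which never reverses an edge it has just crossed. -/
structure IsNonbacktracking (G : SimpleGraph V) (w : ℕ → V) : Prop where
  adj (i : ℕ) : G.Adj (w i) (w (i + 1))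
  ne (i : ℕ) : w (i + 2) ≠ w i

theorem IsNonbacktracking.dist_zero {w : ℕ → V} (hw : IsNonbacktracking G w) (hG : G.IsTree)
    (n : ℕ) : G.dist (w 0) (w n) = n := by
  suffices G.dist (w 0) (w n) = n ∧ G.dist (w 0) (w (n + 1)) = n + 1 from this.1
  induction n with
  | zero => exact ⟨dist_self, dist_eq_one_iff_adj.2 (hw.adj 0)⟩
  | succ n ih =>
    refine ⟨ih.2, ?_⟩
    rcases hG.dist_eq_dist_add_one_of_adj (w 0) (hw.adj (n + 1)) with h | h
    · exact absurd (eq_of_adj_of_dist_eq_add_one hG (hw.adj (n + 1)).symm (hw.adj n) h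
        (by rw [ih.1, ih.2])) (hw.ne n)
    · rw [h, ih.2]

theorem IsNonbacktracking.injective {w : ℕ → V} (hw : IsNonbacktracking G w) (hG : G.IsTree) :
    Injective w := fun a b h => by
  rw [← hw.dist_zero hG a, h, hw.dist_zero hG b]

theorem exists_isNonbacktracking (hleaf : ∀ x, (G.neighborSet x).ncard ≠ 1) {a b : V}
    (hab : G.Adj a b) : ∃ w, w 0 = a ∧ w 1 = b ∧ IsNonbacktracking G w := by
  have hnext : ∀ d : G.Dart, ∃ d' : G.Dart, d'.fst = d.snd ∧ d'.snd ≠ d.fst := by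
    rintro ⟨⟨x, y⟩, hxy⟩
    obtain ⟨z, hz, hzx⟩ : ∃ z, G.Adj y z ∧ z ≠ x := by
      by_contra! h
      exact hleaf y (Set.ncard_eq_one.2 ⟨x, Set.eq_singleton_iff_unique_mem.2 ⟨hxy.symm, h⟩⟩)
    exact ⟨⟨(y, z), hz⟩, rfl, hzx⟩
  choose next hfst hsnd using hnext
  let d : ℕ → G.Dart := fun n => next^[n] ⟨(a, b), hab⟩
  have hd : ∀ n, d (n + 1) = next (d n) := fun n => iterate_succ_apply' _ _ _
  have hd' : ∀ n, (d (n + 1)).fst = (d n).snd := fun n => by rw [hd, hfst]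
  refine ⟨fun n => (d n).fst, rfl, hd' 0, ⟨fun i => ?_, fun i => ?_⟩⟩
  · rw [hd']
    exact (d i).adj
  · rw [hd', hd]
    exact hsnd (d i)

/-- A ray all of whose vertices, except possibly the first, have no neighbours off the ray. -/
structure IsUnbranchedRay (G : SimpleGraph V) (w : ℕ → V) : Prop where
  injective : Injective w
  neighborSet_succ (i : ℕ) : G.neighborSet (w (i + 1)) = {w i, w (i + 2)}

theorem IsNonbacktracking.isUnbranchedRay [G.LocallyFinite] {w : ℕ → V}
    (hw : IsNonbacktracking G w) (hG : G.IsTree) (hval : ∀ i, G.degree (w (i + 1)) ≤ 2) :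
    IsUnbranchedRay G w where
  injective := hw.injective hG
  neighborSet_succ i := by
    have hsub : {w i, w (i + 2)} ⊆ G.neighborSet (w (i + 1)) :=
      Set.pair_subset (hw.adj i).symm (hw.adj (i + 1))
    refine (Set.eq_of_subset_of_ncard_le hsub ?_ (Set.toFinite _)).symm
    rw [Set.ncard_pair (hw.ne i).symm, Set.ncard_eq_toFinset_card', Set.toFinset_card,
      card_neighborSet_eq_degree]
    exact hval i

namespace IsUnbranchedRay

variable {w : ℕ → V}

theorem eq_or_eq_of_adj (hw : IsUnbranchedRay G w) {i : ℕ} {u : V} (hu : G.Adj (w (i + 1)) u) :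
    u = w i ∨ u = w (i + 2) := by
  have hu : u ∈ G.neighborSet (w (i + 1)) := hu
  rwa [hw.neighborSet_succ] at hu

theorem adj (hw : IsUnbranchedRay G w) (i : ℕ) : G.Adj (w i) (w (i + 1)) := by
  have h : w i ∈ G.neighborSet (w (i + 1)) := by simp [hw.neighborSet_succ]
  exact h.symm

theorem eq_add_one_or_eq_add_one_of_adj (hw : IsUnbranchedRay G w) {a b : ℕ}
    (h : G.Adj (w a) (w b)) : b = a + 1 ∨ a = b + 1 := by
  cases a with
  | succ a =>
    rcases hw.eq_or_eq_of_adj h with h | h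
    · exact Or.inr (congrArg (· + 1) (hw.injective h).symm)
    · exact Or.inl (hw.injective h)
  | zero =>
    cases b with
    | zero => exact absurd h (G.irrefl)
    | succ b =>
      rcases hw.eq_or_eq_of_adj h.symm with h | h
      · exact Or.inl (congrArg (· + 1) (hw.injective h).symm)
      · exact Or.inr (hw.injective h)

theorem isNonbacktracking (hw : IsUnbranchedRay G w) : IsNonbacktracking G w :=
  ⟨hw.adj, fun _ h => absurd (hw.injective h) (by omega)⟩

theorem neighborFinset_succ [DecidableEq V] (hw : IsUnbranchedRay G w) (i : ℕ)
    [Fintype (G.neighborSet (w (i + 1)))] :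
    G.neighborFinset (w (i + 1)) = {w i, w (i + 2)} := by
  rw [← Finset.coe_inj, coe_neighborFinset, hw.neighborSet_succ, Finset.coe_pair]

theorem degree_succ (hw : IsUnbranchedRay G w) (i : ℕ) [Fintype (G.neighborSet (w (i + 1)))] :
    G.degree (w (i + 1)) = 2 := by
  classical
  rw [← card_neighborFinset_eq_degree, hw.neighborFinset_succ,
    Finset.card_pair (hw.isNonbacktracking.ne i).symm]

end IsUnbranchedRay

/-- Every unbranched ray of `G` eventually stays on the ray `v`. -/
def AbsorbsUnbranchedRays (G : SimpleGraph V) (v : ℕ → V) : Prop :=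
  ∀ w, IsUnbranchedRay G w → ∀ᶠ j in atTop, w j ∈ Set.range v

namespace IsUnbranchedRay

variable {u v : ℕ → V}

theorem exists_forward_step (hu : IsUnbranchedRay G u) (hv : IsUnbranchedRay G v)
    (habs : AbsorbsUnbranchedRays G v) : ∃ m a, u m = v a ∧ u (m + 1) = v (a + 1) := by
  obtain ⟨n, hn⟩ := eventually_atTop.1 (habs u hu)
  choose c hc using fun j => hn (n + j) (by omega)
  by_contra! hno
  refine not_strictAnti_of_wellFoundedLT c (strictAnti_nat_of_succ_lt fun j => ?_)
  have hadj : G.Adj (v (c j)) (v (c (j + 1))) := by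
    rw [hc, hc]
    exact hu.adj (n + j)
  rcases hv.eq_add_one_or_eq_add_one_of_adj hadj with h | h
  · exact absurd ((hc (j + 1)).symm.trans (congrArg v h)) (hno (n + j) (c j) (hc j).symm)
  · omega

theorem eq_add_of_forward_step (hu : IsUnbranchedRay G u) (hv : IsUnbranchedRay G v) {a : ℕ}
    (h₀ : u 0 = v a) (h₁ : u 1 = v (a + 1)) (j : ℕ) : u j = v (a + j) := by
  suffices u j = v (a + j) ∧ u (j + 1) = v (a + j + 1) from this.1
  induction j with
  | zero => exact ⟨h₀, h₁⟩
  | succ j ih =>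
    refine ⟨ih.2, ?_⟩
    rcases hv.eq_or_eq_of_adj (ih.2 ▸ hu.adj (j + 1)) with hback | hforth
    · exact absurd (hback.trans ih.1.symm) (hu.isNonbacktracking.ne j)
    · exact hforth

theorem exists_eq_add (hu : IsUnbranchedRay G u) (hv : IsUnbranchedRay G v)
    (habs : AbsorbsUnbranchedRays G v) (hstart : ∀ j, u (j + 1) ≠ v 0) :
    ∃ a, ∀ j, u j = v (a + j) := by
  have hbackward : ∀ m, (∃ a, u m = v a ∧ u (m + 1) = v (a + 1)) →
      ∃ a, u 0 = v a ∧ u 1 = v (a + 1) := by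
    intro m
    induction m with
    | zero => exact id
    | succ m ih =>
      rintro ⟨_ | a, h, h'⟩
      · exact absurd h (hstart m)
      · refine ih ⟨a, ?_, h⟩
        rcases hv.eq_or_eq_of_adj (h ▸ (hu.adj m).symm) with hback | hforth
        · exact hback
        · exact absurd (h'.trans hforth.symm) (hu.isNonbacktracking.ne m)
  obtain ⟨m, hm⟩ := hu.exists_forward_step hv habs
  obtain ⟨a, h₀, h₁⟩ := hbackward m hm
  exact ⟨a, hu.eq_add_of_forward_step hv h₀ h₁⟩

end IsUnbranchedRay

end Tree

/-! ### Ends -/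

section Ends

variable {V : Type*} {G : SimpleGraph V}

theorem mem_of_mem_componentCompl {K S : Set V} (hS : ∀ a ∈ S, ∀ b ∉ K, G.Adj a b → b ∈ S)
    {C : G.ComponentCompl K} {c x : V} (hc : c ∈ C) (hcS : c ∈ S) (hx : x ∈ C) : x ∈ S := by
  by_contra hxS
  obtain ⟨hcK, rfl⟩ := hc
  obtain ⟨hxK, h⟩ := hx
  obtain ⟨p⟩ := (ConnectedComponent.eq.1 h).symm
  obtain ⟨⟨⟨a, b⟩, hab⟩, -, ha, hb⟩ := p.exists_boundary_dart (Subtype.val ⁻¹' S) hcS hxS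
  exact hb (hS a ha b b.2 hab)

theorem componentCompl_eq_of_mem {K : Set V} {C D : G.ComponentCompl K} {x : V} (hC : x ∈ C)
    (hD : x ∈ D) : C = D :=
  hC.choose_spec.symm.trans hD.choose_spec

theorem exists_eventually_mem_componentCompl {w : ℕ → V} (hinj : Injective w)
    (hadj : ∀ i, G.Adj (w i) (w (i + 1))) (K : Finset V) :
    ∃ C : G.ComponentCompl (K : Set V), ∀ᶠ j in atTop, w j ∈ C := by
  have hout : ∀ᶠ j in atTop, w j ∉ (K : Set V) := by
    rw [← Nat.cofinite_eq_atTop]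
    exact hinj.tendsto_cofinite K.finite_toSet.compl_mem_cofinite
  obtain ⟨n, hn⟩ := eventually_atTop.1 hout
  refine ⟨G.componentComplMk (hn n le_rfl), eventually_atTop.2 ⟨n, fun j hj => ?_⟩⟩
  induction j, hj using Nat.le_induction with
  | base => exact G.componentComplMk_mem _
  | succ j hj ih => exact ComponentCompl.mem_of_adj _ _ ih (hn _ (by omega)) (hadj j)

theorem IsUnbranchedRay.exists_eq_succ_of_mem {w : ℕ → V} (hw : IsUnbranchedRay G w)
    {K : Set V} (hK : w 0 ∈ K) {C : G.ComponentCompl K} {j : ℕ} (hj : w (j + 1) ∈ C) {x : V}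
    (hx : x ∈ C) : ∃ i, w (i + 1) = x := by
  refine mem_of_mem_componentCompl (S := {x | ∃ i, w (i + 1) = x}) ?_ hj ⟨j, rfl⟩ hx
  rintro _ ⟨i, rfl⟩ b hb hib
  rcases hw.eq_or_eq_of_adj hib with rfl | rfl
  · cases i with
    | zero => exact absurd hK hb
    | succ i => exact ⟨i, rfl⟩
  · exact ⟨i + 1, rfl⟩

/-- The component of the complement of `K` containing the end `e`: the value of the section `e`,
with its type unfolded so that membership makes sense. -/
def endComponent (e : G.end) (K : Finset V) : G.ComponentCompl (K : Set V) :=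
  e.val (op K)

theorem mem_endComponent_of_subset (e : G.end) {K L : Finset V} (hKL : K ⊆ L) {x : V}
    (hx : x ∈ endComponent e L) : x ∈ endComponent e K := by
  have hhom : (endComponent e L).hom (Finset.coe_subset.2 hKL) = endComponent e K :=
    e.prop (CategoryTheory.opHomOfLE hKL)
  exact hhom ▸ ComponentCompl.subset_hom _ _ hx

/-- The ray `w` converges to the end `e`. -/
def ConvergesTo (w : ℕ → V) (e : G.end) : Prop :=
  ∀ K : Finset V, ∀ᶠ j in atTop, w j ∈ endComponent e K

theorem exists_convergesTo {w : ℕ → V} (hinj : Injective w)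
    (hadj : ∀ i, G.Adj (w i) (w (i + 1))) : ∃ e : G.end, ConvergesTo w e := by
  choose C hC using exists_eventually_mem_componentCompl hinj hadj
  refine ⟨⟨fun K => C K.unop, fun {L K} f => ?_⟩, hC⟩
  obtain ⟨j, hL, hK⟩ := ((hC L.unop).and (hC K.unop)).exists
  exact componentCompl_eq_of_mem
    (ComponentCompl.subset_hom _ (CategoryTheory.le_of_op_hom f) hL) hK

theorem isIsolatedEnd_of_forall_eq {V : Type} {G : SimpleGraph V} {e : G.end} (K : Finset V)
    (h : ∀ e' : G.end, endComponent e' K = endComponent e K → e' = e) : IsIsolatedEnd G e := by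
  have hset : ({e} : Set G.end) = Subtype.val ⁻¹' {f | f (op K) = e.val (op K)} :=
    Set.ext fun e' => ⟨fun he' => congrArg (fun e'' : G.end => e''.val (op K)) he', h e'⟩
  rw [IsIsolatedEnd, hset]
  exact ⟨_, iInf_le (fun L : (Finset V)ᵒᵖ => TopologicalSpace.induced
    (fun f : (∀ L, G.componentComplFunctor.obj L) => f L) ⊥) (op K) _
    ⟨{e.val (op K)}, trivial, rfl⟩, rfl⟩

theorem IsUnbranchedRay.isIsolatedEnd {V : Type} {G : SimpleGraph V} {w : ℕ → V}
    (hw : IsUnbranchedRay G w) {e : G.end} (he : ConvergesTo w e) : IsIsolatedEnd G e := by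
  classical
  refine isIsolatedEnd_of_forall_eq {w 0} fun e' he' => Subtype.ext (funext fun K => ?_)
  induction K using Opposite.rec with | _ K => ?_
  obtain ⟨m, hm⟩ := eventually_atTop.1 (he K)
  obtain ⟨n, hn⟩ := eventually_atTop.1 (he {w 0})
  obtain ⟨x, hx⟩ := (endComponent e' (K ∪ (Finset.range (m + 1)).image w)).nonempty
  have hx₀ : x ∈ endComponent e {w 0} :=
    he' ▸ mem_endComponent_of_subset e'
      (Finset.singleton_subset_iff.2 (Finset.mem_union_right _
        (Finset.mem_image_of_mem w (Finset.mem_range.2 m.succ_pos)))) hx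
  obtain ⟨i, rfl⟩ := hw.exists_eq_succ_of_mem (by simp) (hn (n + 1) (by omega)) hx₀
  have hi : m ≤ i + 1 := by
    by_contra hlt
    exact ComponentCompl.notMem_of_mem hx (Finset.mem_coe.2 (Finset.mem_union_right _
      (Finset.mem_image_of_mem w (Finset.mem_range.2 (by omega)))))
  exact componentCompl_eq_of_mem (mem_endComponent_of_subset e' Finset.subset_union_left hx)
    (hm (i + 1) hi)

end Ends

namespace TreeDyn

variable {V : Type} {T : TreeDyn V} {infty : T.G.end} {dV : V → ℕ} {dE : V → V → ℕ}

noncomputable instance instLocallyFinite (T : TreeDyn V) : T.G.LocallyFinite := fun v =>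
  (T.locFin v).fintype

theorem ncard_neighborSet (T : TreeDyn V) (v : V) : (T.G.neighborSet v).ncard = T.G.degree v := by
  rw [Set.ncard_eq_toFinset_card', Set.toFinset_card, card_neighborSet_eq_degree]

theorem IsPolyLike.ncard_neighborSet_ne_one (hpl : T.IsPolyLike infty) (v : V) :
    (T.G.neighborSet v).ncard ≠ 1 :=
  hpl.2.2.2.1 v

theorem IsLocalDeg.dE_pos (hdeg : T.IsLocalDeg dV dE) {v w : V} (h : T.G.Adj v w) : 0 < dE v w :=
  hdeg.2.2.1 h

theorem degree_map_le (T : TreeDyn V) (v : V) : T.G.degree (T.F v) ≤ T.G.degree v := by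
  simp only [← card_neighborFinset_eq_degree]
  refine Finset.card_le_card_of_surjOn T.F fun z hz => ?_
  obtain ⟨w, hw, rfl⟩ := T.edgeSurj ((T.G.mem_neighborFinset _ z).1 hz)
  exact ⟨w, by simpa using hw, rfl⟩

/-! ### The ray from the base to infinity -/

theorem IsPolyLike.absorbsUnbranchedRays (hpl : T.IsPolyLike infty) {v : ℕ → V}
    (hv : IsUnbranchedRay T.G v) (h₁ : v 1 ∈ endComponent infty {v 0}) :
    AbsorbsUnbranchedRays T.G v := fun w hw => by
  obtain ⟨e, he⟩ := exists_convergesTo hw.injective hw.adj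
  obtain rfl := hpl.2.2.1 e (hw.isIsolatedEnd he)
  filter_upwards [he {v 0}] with j hj
  obtain ⟨i, hi⟩ := hv.exists_eq_succ_of_mem (by simp) h₁ hj
  exact ⟨i + 1, hi⟩

theorem IsBase.degree_le_two_of_mem {v₀ : V} (hbase : T.IsBase infty v₀) {x : V}
    (hx : x ∈ endComponent infty {v₀}) : T.G.degree x ≤ 2 := by
  by_contra! hlt
  rcases hbase.2 x (by rwa [ncard_neighborSet]) with rfl | ⟨_, hne⟩
  · exact ComponentCompl.notMem_of_mem hx (by simp)
  · exact hne hx.choose_spec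

theorem IsPolyLike.exists_ray_from_base (hpl : T.IsPolyLike infty) {v₀ : V}
    (hbase : T.IsBase infty v₀) :
    ∃ v, v 0 = v₀ ∧ IsUnbranchedRay T.G v ∧ AbsorbsUnbranchedRays T.G v := by
  obtain ⟨⟨v₁, v₀'⟩, hv₁, hv₀', hadj⟩ := (endComponent infty {v₀}).exists_adj_boundary_pair
    T.isTree.connected.preconnected ⟨v₀, by simp⟩
  obtain rfl : v₀' = v₀ := by simpa using hv₀'
  obtain ⟨v, rfl, rfl, hv⟩ := exists_isNonbacktracking hpl.ncard_neighborSet_ne_one hadj.symm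
  have hmem : ∀ i, v (i + 1) ∈ endComponent infty {v 0} := fun i => by
    induction i with
    | zero => exact hv₁
    | succ i ih =>
      refine ComponentCompl.mem_of_adj _ _ ih ?_ (hv.adj (i + 1))
      simp [(hv.injective T.isTree).eq_iff]
  have hray := hv.isUnbranchedRay T.isTree fun i => hbase.degree_le_two_of_mem (hmem i)
  exact ⟨v, rfl, hray, hpl.absorbsUnbranchedRays hray hv₁⟩

theorem isUnbranchedRay_map (hleaf : ∀ x, (T.G.neighborSet x).ncard ≠ 1) {v : ℕ → V}
    (hv : IsUnbranchedRay T.G v) : IsUnbranchedRay T.G (T.F ∘ v) := by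
  refine IsNonbacktracking.isUnbranchedRay ⟨fun i => T.adjMap (hv.adj i), fun i hfold => ?_⟩
    T.isTree fun i => (T.degree_map_le _).trans_eq (hv.degree_succ i)
  refine hleaf (T.F (v (i + 1))) (Set.ncard_eq_one.2 ⟨T.F (v i),
    Set.eq_singleton_iff_unique_mem.2 ⟨(T.adjMap (hv.adj i)).symm, fun z hz => ?_⟩⟩)
  obtain ⟨x, hx, rfl⟩ := T.edgeSurj hz
  rcases hv.eq_or_eq_of_adj hx with rfl | rfl
  · rfl
  · exact hfold

theorem exists_map_ray_eq_add (hleaf : ∀ x, (T.G.neighborSet x).ncard ≠ 1) {v : ℕ → V}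
    (hv : IsUnbranchedRay T.G v) (habs : AbsorbsUnbranchedRays T.G v)
    (hstart : 3 ≤ T.G.degree (v 0)) : ∃ a, ∀ i, T.F (v i) = v (a + i) := by
  refine (isUnbranchedRay_map hleaf hv).exists_eq_add hv habs fun j hj => ?_
  have := T.degree_map_le (v (j + 1))
  rw [show T.F (v (j + 1)) = v 0 from hj, hv.degree_succ] at this
  omega

/-! ### Degrees -/

/-- The fibre of the branched covering over a vertex. -/
noncomputable def fiber (T : TreeDyn V) (y : V) : Finset V := (T.finFibers y).toFinset

@[simp]
theorem mem_fiber {x y : V} : x ∈ T.fiber y ↔ T.F x = y := by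
  simp [fiber]

open Classical in
theorem IsLocalDeg.sum_dE_eq_dV (hdeg : T.IsLocalDeg dV dE) {a z : V} (hz : T.G.Adj (T.F a) z) :
    ∑ b ∈ T.G.neighborFinset a with T.F b = z, dE a b = dV a := by
  obtain ⟨w, hw, rfl⟩ := T.edgeSurj hz
  rw [hdeg.2.2.2.2 hw, ← finsum_mem_coe_finset]
  simp

theorem IsLocalDeg.sum_neighborFinset_dE (hdeg : T.IsLocalDeg dV dE) (v : V) :
    ∑ w ∈ T.G.neighborFinset v, dE v w = T.G.degree (T.F v) * dV v := by
  classical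
  have hmaps : ∀ w ∈ T.G.neighborFinset v, T.F w ∈ T.G.neighborFinset (T.F v) := fun w hw => by
    simpa using T.adjMap ((T.G.mem_neighborFinset v w).1 hw)
  rw [← Finset.sum_fiberwise_of_maps_to hmaps, ← card_neighborFinset_eq_degree, ← smul_eq_mul]
  exact Finset.sum_eq_card_nsmul fun z hz =>
    hdeg.sum_dE_eq_dV ((T.G.mem_neighborFinset _ z).1 hz)

theorem IsLocalDeg.multV_add (hdeg : T.IsLocalDeg dV dE) (v : V) :
    T.multV dV dE v + T.G.degree (T.F v) * dV v + 2 = 2 * dV v + T.G.degree v := by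
  have hfinsum : ∑ᶠ w ∈ T.G.neighborSet v, (dE v w - 1) =
      ∑ w ∈ T.G.neighborFinset v, (dE v w - 1) := finsum_mem_eq_toFinset_sum _ _
  have hsum : ∑ w ∈ T.G.neighborFinset v, (dE v w - 1) + T.G.degree v =
      T.G.degree (T.F v) * dV v := by
    rw [← hdeg.sum_neighborFinset_dE, ← card_neighborFinset_eq_degree, Finset.card_eq_sum_ones,
      ← Finset.sum_add_distrib]
    exact Finset.sum_congr rfl fun w hw =>
      Nat.sub_add_cancel (hdeg.dE_pos ((T.G.mem_neighborFinset v w).1 hw))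
  have hRH := hdeg.2.2.2.1 v
  rw [multV, hfinsum]
  omega

theorem IsLocalDeg.multV_pos (hdeg : T.IsLocalDeg dV dE) {v : V}
    (hFv : T.G.degree (T.F v) ≤ 2) (hv : 3 ≤ T.G.degree v) : 0 < T.multV dV dE v := by
  have hRH := hdeg.multV_add v
  have := Nat.mul_le_mul_right (dV v) hFv
  omega

/-! ### Flux of the distance gradient -/

open Classical in
/-- The pushforward along `F` of a function `g` on oriented edges: its value on the edge from `y`
to `z` is the sum of `g` over the oriented edges above it. -/
noncomputable def edgePushforward {M : Type*} [AddCommMonoid M] (T : TreeDyn V) (g : V → V → M)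
    (y z : V) : M :=
  ∑ a ∈ T.fiber y, ∑ b ∈ T.G.neighborFinset a with T.F b = z, g a b

theorem edgePushforward_swap {M : Type*} [AddCommMonoid M] (g : V → V → M) (y z : V) :
    T.edgePushforward g y z = T.edgePushforward (fun a b => g b a) z y := by
  classical
  refine Finset.sum_comm' fun a b => ?_
  simp only [mem_fiber, Finset.mem_filter, mem_neighborFinset, T.G.adj_comm a b]
  tauto

theorem sum_fiber_sum_neighborFinset {M : Type*} [AddCommMonoid M] (g : V → V → M) (y : V) :
    ∑ a ∈ T.fiber y, ∑ b ∈ T.G.neighborFinset a, g a b =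
      ∑ z ∈ T.G.neighborFinset y, T.edgePushforward g y z := by
  classical
  simp only [edgePushforward]
  rw [Finset.sum_comm]
  refine Finset.sum_congr rfl fun a ha => (Finset.sum_fiberwise_of_maps_to (fun b hb => ?_) _).symm
  rw [mem_neighborFinset] at hb ⊢
  exact mem_fiber.1 ha ▸ T.adjMap hb

theorem IsLocalDeg.edgePushforward_dE (hdeg : T.IsLocalDeg dV dE) {y z : V} (h : T.G.Adj y z) :
    T.edgePushforward dE y z = ∑ a ∈ T.fiber y, dV a :=
  Finset.sum_congr rfl fun _ ha => hdeg.sum_dE_eq_dV (by rwa [mem_fiber.1 ha])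

theorem IsLocalDeg.sum_fiber_eq (hdeg : T.IsLocalDeg dV dE) {y z : V} (h : T.G.Adj y z) :
    ∑ a ∈ T.fiber y, dV a = ∑ a ∈ T.fiber z, dV a := by
  have hsymm : (fun a b => dE b a) = dE := funext₂ fun a b => hdeg.1 b a
  rw [← hdeg.edgePushforward_dE h, ← hdeg.edgePushforward_dE h.symm, edgePushforward_swap, hsymm]

/-- The flux of the gradient of `dist r` through the edges lying above the edge from `y` to `z`. -/
noncomputable def distFlux (T : TreeDyn V) (r y z : V) : ℤ :=
  T.edgePushforward (fun a b => (T.G.dist r b : ℤ) - T.G.dist r a) y z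

theorem distFlux_swap (r y z : V) : T.distFlux r z y = -T.distFlux r y z := by
  rw [distFlux, edgePushforward_swap, distFlux]
  simp only [edgePushforward, ← Finset.sum_neg_distrib, neg_sub]

theorem IsLocalDeg.distFlux_le (hdeg : T.IsLocalDeg dV dE) (r : V) {y z : V} (h : T.G.Adj y z) :
    T.distFlux r y z ≤ (∑ a ∈ T.fiber y, dV a : ℕ) := by
  classical
  rw [← hdeg.edgePushforward_dE h, distFlux]
  simp only [edgePushforward, Nat.cast_sum]
  refine Finset.sum_le_sum fun a _ => Finset.sum_le_sum fun b hb => ?_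
  have hab : T.G.Adj a b := (T.G.mem_neighborFinset a b).1 (Finset.mem_filter.1 hb).1
  have := T.isTree.dist_eq_dist_add_one_of_adj r hab
  have := hdeg.dE_pos hab
  omega

theorem sum_fiber_degree_sub_two_le (T : TreeDyn V) (r y : V) :
    ∑ x ∈ T.fiber y, ((T.G.degree x : ℤ) - 2) ≤ ∑ z ∈ T.G.neighborFinset y, T.distFlux r y z := by
  simp only [distFlux, ← sum_fiber_sum_neighborFinset]
  exact Finset.sum_le_sum fun x _ => degree_sub_two_le_sum_dist_sub T.isTree r x

theorem sum_fiber_degree_sub_two_le_distFlux_sub {v : ℕ → V} (hv : IsUnbranchedRay T.G v) (r : V)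
    (i : ℕ) : ∑ x ∈ T.fiber (v (i + 1)), ((T.G.degree x : ℤ) - 2) ≤
      T.distFlux r (v (i + 1)) (v (i + 2)) - T.distFlux r (v i) (v (i + 1)) := by
  classical
  have h := T.sum_fiber_degree_sub_two_le r (v (i + 1))
  rw [hv.neighborFinset_succ, Finset.sum_pair (hv.isNonbacktracking.ne i).symm, distFlux_swap] at h
  linarith

theorem IsLocalDeg.exists_forall_degree_le_two (hdeg : T.IsLocalDeg dV dE) {v : ℕ → V}
    (hv : IsUnbranchedRay T.G v) :
    ∃ n, ∀ i, n ≤ i → ∀ x, T.F x = v (i + 1) → T.G.degree x ≤ 2 := by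
  have hnonneg : ∀ i, ∀ x ∈ T.fiber (v (i + 1)), 0 ≤ (T.G.degree x : ℤ) - 2 := fun i x hx => by
    have := T.degree_map_le x
    rw [mem_fiber.1 hx, hv.degree_succ] at this
    omega
  let flux : ℕ → ℤ := fun i => T.distFlux (v 0) (v i) (v (i + 1))
  have hexcess : ∀ i, ∑ x ∈ T.fiber (v (i + 1)), ((T.G.degree x : ℤ) - 2) ≤
      flux (i + 1) - flux i := sum_fiber_degree_sub_two_le_distFlux_sub hv (v 0)
  have hmono : Monotone flux := monotone_nat_of_le_succ fun i =>
    sub_nonneg.1 ((Finset.sum_nonneg (hnonneg i)).trans (hexcess i))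
  have hconst : ∀ i, ∑ a ∈ T.fiber (v i), dV a = ∑ a ∈ T.fiber (v 0), dV a := fun i => by
    induction i with
    | zero => rfl
    | succ i ih => rw [← hdeg.sum_fiber_eq (hv.adj i), ih]
  have hbdd : ∀ i, flux i ≤ (∑ a ∈ T.fiber (v 0), dV a : ℕ) := fun i =>
    hconst i ▸ hdeg.distFlux_le (v 0) (hv.adj i)
  obtain ⟨_, ⟨n, rfl⟩, hmax⟩ := Int.exists_greatest_of_bdd (P := fun z => ∃ i, flux i = z)
    ⟨_, fun _ ⟨i, hi⟩ => hi ▸ hbdd i⟩ ⟨_, 0, rfl⟩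
  refine ⟨n, fun i hi x hx => ?_⟩
  have hx := Finset.single_le_sum (hnonneg i) (mem_fiber.2 hx)
  have := hexcess i
  have := hmono hi
  have := hmax _ ⟨i + 1, rfl⟩
  omega

/-! ### A fixed ray has no other preimages -/

theorem exists_lift (T : TreeDyn V) {v : ℕ → V} (hv : ∀ i, T.G.Adj (v i) (v (i + 1))) {x : V}
    (hx : T.F x = v 0) :
    ∃ w : ℕ → V, w 0 = x ∧ (∀ i, T.G.Adj (w i) (w (i + 1))) ∧ ∀ i, T.F (w i) = v i := by
  choose next hadj hF using fun i (y : {y // T.F y = v i}) =>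
    T.edgeSurj (v := y.1) (w' := v (i + 1)) (by rw [y.2]; exact hv i)
  let w : ∀ i, {y // T.F y = v i} := fun i => Nat.rec ⟨x, hx⟩ (fun i y => ⟨next i y, hF i y⟩) i
  exact ⟨fun i => (w i).1, rfl, fun i => hadj i (w i), fun i => (w i).2⟩

theorem IsLocalDeg.exists_lift_mem_range (hdeg : T.IsLocalDeg dV dE) {v w : ℕ → V}
    (hv : IsUnbranchedRay T.G v) (habs : AbsorbsUnbranchedRays T.G v)
    (hadj : ∀ i, T.G.Adj (w i) (w (i + 1))) (hlift : ∀ i, T.F (w i) = v (i + 1)) :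
    ∃ j, w j ∈ Set.range v := by
  obtain ⟨n, hn⟩ := hdeg.exists_forall_degree_le_two hv
  have htail : IsUnbranchedRay T.G fun j => w (n + j) := by
    refine IsNonbacktracking.isUnbranchedRay ⟨fun j => hadj _, fun j h => ?_⟩ T.isTree
      fun j => hn _ (by omega) _ (hlift _)
    have := hv.injective ((hlift _).symm.trans ((congrArg T.F h).trans (hlift _)))
    omega
  obtain ⟨j, hj⟩ := (habs _ htail).exists
  exact ⟨n + j, hj⟩

theorem IsLocalDeg.eq_of_map_eq (hdeg : T.IsLocalDeg dV dE) {v : ℕ → V}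
    (hv : IsUnbranchedRay T.G v) (habs : AbsorbsUnbranchedRays T.G v)
    (hfix : ∀ i, T.F (v i) = v i) {x : V} (hx : T.F x = v 1) : x = v 1 := by
  obtain ⟨w, rfl, hadj, hlift⟩ := T.exists_lift (v := fun i => v (i + 1)) (fun i => hv.adj _) hx
  have hback : ∀ j, w j = v (j + 1) → w 0 = v 1 := fun j => by
    induction j with
    | zero => exact id
    | succ j ih =>
      intro h
      obtain ⟨i, hi⟩ : ∃ i, w j = v i := by
        rcases hv.eq_or_eq_of_adj (h ▸ (hadj j).symm) with h | h
        exacts [⟨_, h⟩, ⟨_, h⟩]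
      exact ih (by rw [← hlift, hi, hfix])
  obtain ⟨j, i, hi⟩ := hdeg.exists_lift_mem_range hv habs hadj hlift
  exact hback j (by rw [← hlift, ← hi, hfix])

theorem IsPolyLike.not_forall_map_eq (hpl : T.IsPolyLike infty) {v : ℕ → V}
    (hv : IsUnbranchedRay T.G v) (habs : AbsorbsUnbranchedRays T.G v) :
    ¬∀ i, T.F (v i) = v i := by
  intro hfix
  obtain ⟨dV, dE, hdeg⟩ := hpl.1
  have hunique : ∀ m x, T.F^[m] x = v 1 → x = v 1 := fun m => by
    induction m with
    | zero => exact fun x hx => hx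
    | succ m ih => exact fun x hx => hdeg.eq_of_map_eq hv habs hfix (ih _ hx)
  obtain ⟨w, ⟨n, m, -, -, hnm⟩, hw⟩ := hpl.2.2.2.2 (v 1)
  rw [iterate_fixed (hfix 1)] at hnm
  rw [hunique m w hnm.symm, ncard_neighborSet, hv.degree_succ] at hw
  omega

end TreeDyn

/-- **The base is a critical point.**
Let `F : T → T` be a polynomial-like branched covering of a simplicial tree
with local degree function `(dV, dE)` and base `v₀`.  Then the critical
multiplicity `m(v₀) = 2 dV(v₀) − 2 − Σ_{e ∈ E_{v₀}} (dE(e) − 1)` is positive. -/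
theorem base_is_critical
    {V : Type} (T : TreeDyn V) (infty : T.G.end)
    (hpl : T.IsPolyLike infty)
    (dV : V → ℕ) (dE : V → V → ℕ) (hdeg : T.IsLocalDeg dV dE)
    (v₀ : V) (hbase : T.IsBase infty v₀) :
    0 < T.multV dV dE v₀ := by
  obtain ⟨v, rfl, hv, habs⟩ := hpl.exists_ray_from_base hbase
  have hval : 3 ≤ T.G.degree (v 0) := T.ncard_neighborSet (v 0) ▸ hbase.1
  obtain ⟨a, ha⟩ := TreeDyn.exists_map_ray_eq_add hpl.ncard_neighborSet_ne_one hv habs hval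
  cases a with
  | zero => exact absurd (fun i => by simpa using ha i) (hpl.not_forall_map_eq hv habs)
  | succ a =>
    have hF : T.G.degree (T.F (v 0)) = 2 := by
      rw [ha 0]
      exact hv.degree_succ a
    exact hdeg.multV_pos hF.le hval
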